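/- (Convergence of the Fletcher–Reeves-type directions.) Let 0 < c₂ < 1/2 and suppose g_k ≠ 0 for all k ≥ 0, η_0 = −g_0, η_{k+1} = −g_{k+1} + β_{k+1} v_k with β_{k+1} = ‖g_{k+1}‖²/‖g_k‖², for every k ≥ 0 both |⟨g_{k+1}, v_k⟩| ≤ c₂ |⟨g_k, η_k⟩| and ‖v_k‖ ≤ ‖η_k‖ hold, and the Zoutendijk condition ∑_{k=0}^∞ ⟨g_k, η_k⟩²/‖η_k‖² < ∞ holds. Then lim inf_{k→∞} ‖g_k‖ = 0. -/

import Mathlib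

open scoped RealInnerProductSpace

/-- Convergence of the Fletcher–Reeves-type directions. -/
theorem stmt9 {H : Type*} [NormedAddCommGroup H] [InnerProductSpace ℝ H]
    (c₂ : ℝ) (hc₂0 : 0 < c₂) (hc₂ : c₂ < 1 / 2)
    (g η v : ℕ → H)
    (hg : ∀ k, g k ≠ 0)
    (hη0 : η 0 = -g 0)
    (hrec : ∀ k, η (k + 1) = -g (k + 1) + (‖g (k + 1)‖ ^ 2 / ‖g k‖ ^ 2) • v k)
    (hwolfe : ∀ k, |(⟪g (k + 1), v k⟫)| ≤ c₂ * |(⟪g k, η k⟫)|)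
    (hv : ∀ k, ‖v k‖ ≤ ‖η k‖)
    (hzout : Summable (fun k => ⟪g k, η k⟫ ^ 2 / ‖η k‖ ^ 2)) :
    Filter.liminf (fun k => ‖g k‖) Filter.atTop = 0 := by
  have ha : ∀ k, 0 < ‖g k‖ ^ 2 := fun k => by
    have := norm_pos_iff.mpr (hg k)
    positivity
  obtain ⟨r, hr⟩ : ∃ r : ℕ → ℝ, ∀ k, ⟪g k, η k⟫ = r k * ‖g k‖ ^ 2 :=
    ⟨fun k => ⟪g k, η k⟫ / ‖g k‖ ^ 2, fun k => (div_mul_cancel₀ _ (ha k).ne').symm⟩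
  have hw : ∀ k, |(⟪g (k + 1), v k⟫)| ≤ c₂ * |r k| * ‖g k‖ ^ 2 := fun k => by
    have := hwolfe k
    rw [hr, abs_mul, abs_of_pos (ha k)] at this
    linarith
  have hr0 : r 0 = -1 := by
    have h := hr 0
    rw [hη0, inner_neg_right, real_inner_self_eq_norm_sq] at h
    have := ha 0
    have h2 : (r 0 + 1) * ‖g 0‖ ^ 2 = 0 := by linarith
    rcases mul_eq_zero.mp h2 with h3 | h3 <;> linarith
  have hstep : ∀ k, |r (k + 1) + 1| ≤ c₂ * |r k| := fun k => by
    have h := hr (k + 1)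
    rw [hrec, inner_add_right, inner_neg_right, real_inner_self_eq_norm_sq,
      real_inner_smul_right] at h
    have h1 := ha k
    have h2 := ha (k + 1)
    have e : r (k + 1) + 1 = ⟪g (k + 1), v k⟫ / ‖g k‖ ^ 2 := by
      field_simp at h ⊢
      nlinarith
    rw [e, abs_div, abs_of_pos h1, div_le_iff₀ h1]
    exact hw k
  have hc1 : 0 < 1 - c₂ := by linarith
  have hub : ∀ k, |r k| ≤ 1 / (1 - c₂) := by
    intro k
    induction k with
    | zero => rw [hr0, abs_neg, abs_one, le_div_iff₀ hc1]; linarith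
    | succ k ih =>
      have h1 : |r (k + 1)| ≤ |r (k + 1) + 1| + 1 := by
        have := abs_sub (r (k + 1) + 1) 1
        simpa using this
      have h2 := mul_le_mul_of_nonneg_left ih hc₂0.le
      have h3 : c₂ * (1 / (1 - c₂)) + 1 = 1 / (1 - c₂) := by field_simp; ring
      linarith [hstep k]
  have hub2 : ∀ k, |r k| ≤ 2 := fun k => (hub k).trans (by
    rw [div_le_iff₀ hc1]; linarith)
  obtain ⟨δ, hδ, hlow⟩ : ∃ δ : ℝ, 0 < δ ∧ ∀ k, δ ≤ |r k| := by
    refine ⟨(1 - 2 * c₂) / (1 - c₂), div_pos (by linarith) hc1, fun k => ?_⟩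
    cases k with
    | zero => rw [hr0, abs_neg, abs_one, div_le_iff₀ hc1]; linarith
    | succ k =>
      have h2 := mul_le_mul_of_nonneg_left (hub k) hc₂0.le
      have h3 : (1 - 2 * c₂) / (1 - c₂) = 1 - c₂ * (1 / (1 - c₂)) := by field_simp; ring
      have h4 := le_abs_self (r (k + 1) + 1)
      have h5 := neg_abs_le (r (k + 1))
      linarith [hstep k]
  have hηpos : ∀ k, 0 < ‖η k‖ ^ 2 := fun k => by
    have : η k ≠ 0 := by
      intro h0
      have h := hr k
      rw [h0, inner_zero_right] at h
      rcases mul_eq_zero.mp h.symm with h3 | h3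
      · have := hlow k
        rw [h3, abs_zero] at this
        linarith
      · exact (ha k).ne' h3
    have := norm_pos_iff.mpr this
    positivity
  obtain ⟨t, ht⟩ : ∃ t : ℕ → ℝ, ∀ k, t k = ‖η k‖ ^ 2 / (‖g k‖ ^ 2) ^ 2 := ⟨_, fun _ => rfl⟩
  have htpos : ∀ k, 0 < t k := fun k => by
    rw [ht]; exact div_pos (hηpos k) (pow_pos (ha k) 2)
  have htstep : ∀ k, t (k + 1) ≤ t k + 3 / ‖g (k + 1)‖ ^ 2 := fun k => by
    have h1 := ha k
    have h2 := ha (k + 1)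
    have hvk : ‖v k‖ ^ 2 ≤ ‖η k‖ ^ 2 := by
      have := hv k
      gcongr
    have hi : -⟪g (k + 1), v k⟫ ≤ ‖g k‖ ^ 2 := by
      have a1 := neg_abs_le (⟪g (k + 1), v k⟫)
      have a2 := hw k
      have a3 : c₂ * |r k| ≤ 1 := by nlinarith [hub2 k, abs_nonneg (r k)]
      nlinarith
    have e : ‖η (k + 1)‖ ^ 2 = ‖g (k + 1)‖ ^ 2
        + 2 * (‖g (k + 1)‖ ^ 2 / ‖g k‖ ^ 2) * (-⟪g (k + 1), v k⟫)
        + (‖g (k + 1)‖ ^ 2 / ‖g k‖ ^ 2) ^ 2 * ‖v k‖ ^ 2 := by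
      rw [hrec, norm_add_sq_real, norm_neg, inner_neg_left, real_inner_smul_right, norm_smul,
        mul_pow, Real.norm_eq_abs, sq_abs]
      ring
    have hle : ‖η (k + 1)‖ ^ 2 ≤ ‖g (k + 1)‖ ^ 2
        + 2 * (‖g (k + 1)‖ ^ 2 / ‖g k‖ ^ 2) * (‖g k‖ ^ 2)
        + (‖g (k + 1)‖ ^ 2 / ‖g k‖ ^ 2) ^ 2 * ‖η k‖ ^ 2 := by
      rw [e]
      gcongr
    rw [ht, ht, div_le_iff₀ (pow_pos h2 2)]
    refine hle.trans (le_of_eq ?_)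
    clear hle e hi hvk
    generalize ‖g (k + 1)‖ ^ 2 = a at *
    generalize ‖g k‖ ^ 2 = b at *
    field_simp
    ring
  have hterm : ∀ k, δ ^ 2 / t k ≤ ⟪g k, η k⟫ ^ 2 / ‖η k‖ ^ 2 := fun k => by
    have h1 := ha k
    have h2 := hηpos k
    have e : ⟪g k, η k⟫ ^ 2 / ‖η k‖ ^ 2 = |r k| ^ 2 / t k := by
      rw [hr, ht, sq_abs]
      field_simp
    rw [e]
    have := hlow k
    have := htpos k
    gcongr
  have key : ∀ ε : ℝ, 0 < ε → ∃ᶠ k in Filter.atTop, ‖g k‖ ≤ ε := by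
    intro ε hε
    by_contra hcon
    rw [Filter.not_frequently, Filter.eventually_atTop] at hcon
    obtain ⟨N, hN⟩ := hcon
    have hlin : ∀ m : ℕ, t (N + m) ≤ t N + m * (3 / ε ^ 2) := by
      intro m
      induction m with
      | zero => simp
      | succ m ih =>
        have h1 := htstep (N + m)
        have h2 : ε ≤ ‖g (N + m + 1)‖ := (not_le.mp (hN (N + m + 1) (by omega))).le
        have h3 : 3 / ‖g (N + m + 1)‖ ^ 2 ≤ 3 / ε ^ 2 := by gcongr
        rw [← add_assoc]
        push_cast
        linarith
    have hs := (summable_nat_add_iff N).mpr hzout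
    have hC : 0 < t N + 3 / ε ^ 2 := add_pos (htpos N) (by positivity)
    have hs2 := hs.mul_left ((t N + 3 / ε ^ 2) / δ ^ 2)
    have hsum : Summable (fun m : ℕ => 1 / ((m : ℝ) + 1)) := by
      refine Summable.of_nonneg_of_le (fun m => by positivity) (fun m => ?_) hs2
      have h1 : t (m + N) ≤ (t N + 3 / ε ^ 2) * (m + 1) := by
        rw [add_comm m N]
        have := hlin m
        have h3 : 0 < 3 / ε ^ 2 := by positivity
        have h4 : 0 ≤ (m : ℝ) * t N := mul_nonneg (by positivity) (htpos N).le
        linarith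
      have h2 := htpos (m + N)
      calc 1 / ((m : ℝ) + 1)
          = (t N + 3 / ε ^ 2) / δ ^ 2 * (δ ^ 2 / ((t N + 3 / ε ^ 2) * (m + 1))) := by
            generalize t N + 3 / ε ^ 2 = C at *
            field_simp
        _ ≤ (t N + 3 / ε ^ 2) / δ ^ 2 * (δ ^ 2 / t (m + N)) := by gcongr
        _ ≤ _ := by
            have := hterm (m + N)
            gcongr
    apply Real.not_summable_one_div_natCast
    rw [← summable_nat_add_iff 1]
    simpa using hsum
  have hbdd : Filter.IsBoundedUnder (· ≥ ·) Filter.atTop (fun k => ‖g k‖) :=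
    Filter.isBoundedUnder_of ⟨0, fun k => norm_nonneg _⟩
  apply le_antisymm
  · refine le_of_forall_pos_le_add fun ε hε => ?_
    rw [zero_add]
    exact Filter.liminf_le_of_frequently_le (key ε hε) hbdd
  · exact Filter.le_liminf_of_le (Filter.IsCoboundedUnder.of_frequently_le (key 1 one_pos))
      (Filter.Eventually.of_forall fun k => norm_nonneg _)
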